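/- (Young inequality for spectral potential and t-entropy) For every φ ∈ L^∞(X, m) and every α-invariant measure μ ∈ M_α(X, m) one has λ(φ) ≥ μ[φ] + τ(μ). -/

import Mathlib

open MeasureTheory Filter
open scoped ENNReal NNReal

noncomputable section

/-- The Birkhoff sum `S_n φ (x) = φ(x) + φ(α x) + ⋯ + φ(α^{n-1} x)`. -/
def birkhoff {X : Type*} (α : X → X) (φ : X → ℝ) (n : ℕ) (x : X) : ℝ :=
  ∑ i ∈ Finset.range n, φ (α^[i] x)

/-- Boundedness of the shift operator `A f = f ∘ α` on `L¹(X, m)`: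
there is `C > 0` with `m (α⁻¹ G) ≤ C · m G` for all measurable `G`. -/
def ShiftBounded {X : Type*} [MeasurableSpace X] (m : Measure X) (α : X → X) : Prop :=
  ∃ C : ℝ≥0, 0 < C ∧ ∀ G : Set X, MeasurableSet G → m (α ⁻¹' G) ≤ (C : ℝ≥0∞) * m G

/-- The operator norm `‖(e^ψ A^s)^k‖` of the `k`-th power of the weighted shift operator
`e^ψ A^s` (with base shift `α^[s]`) acting on `L¹(X, m)`, computed as the supremum of
`‖(e^ψ A^s)^k f‖₁` over `f` with `‖f‖₁ = 1`. -/
def weightedOpNorm {X : Type*} [MeasurableSpace X] (m : Measure X) (α : X → X) (s : ℕ)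
    (ψ : X → ℝ) (k : ℕ) : ℝ :=
  sSup {r : ℝ | ∃ f : X → ℝ, Integrable f m ∧ (∫ x, |f x| ∂m) = 1 ∧
    r = ∫ x, Real.exp (∑ j ∈ Finset.range k, ψ (α^[s * j] x)) * |f (α^[s * k] x)| ∂m}

/-- `λ(ψ, A^s)`: the logarithm of the spectral radius of `e^ψ A^s` on `L¹(X, m)`. -/
def spectralPotentialBase {X : Type*} [MeasurableSpace X] (m : Measure X) (α : X → X)
    (s : ℕ) (ψ : X → ℝ) : ℝ :=
  limUnder atTop fun k : ℕ => Real.log (weightedOpNorm m α s ψ k) / (k : ℝ)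

/-- The spectral potential `λ(φ) = lim (1/n) ln ‖A_φⁿ‖`. -/
def spectralPotential {X : Type*} [MeasurableSpace X] (m : Measure X) (α : X → X)
    (φ : X → ℝ) : ℝ :=
  spectralPotentialBase m α 1 φ

/-- A functional on `L^∞(X, m)` is positive if it is nonnegative on nonnegative functions. -/
def IsPositiveFunctional {X : Type*} [MeasurableSpace X] (m : Measure X)
    (μ : Lp ℝ ⊤ m → ℝ) : Prop :=
  ∀ φ : Lp ℝ ⊤ m, (0 : X → ℝ) ≤ᵐ[m] ⇑φ → 0 ≤ μ φ

/-- A functional on `L^∞(X, m)` is normalized if its value on the unit function is `1`. -/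
def IsNormalizedFunctional {X : Type*} [MeasurableSpace X] (m : Measure X)
    (μ : Lp ℝ ⊤ m → ℝ) : Prop :=
  ∀ φ : Lp ℝ ⊤ m, ⇑φ =ᵐ[m] (fun _ => (1 : ℝ)) → μ φ = 1

/-- A functional `μ` on `L^∞(X, m)` is `α`-invariant if `μ[f ∘ α] = μ[f]`. -/
def IsInvariantFunctional {X : Type*} [MeasurableSpace X] (m : Measure X) (α : X → X)
    (μ : Lp ℝ ⊤ m → ℝ) : Prop :=
  ∀ φ ψ : Lp ℝ ⊤ m, ⇑ψ =ᵐ[m] (fun x => φ (α x)) → μ ψ = μ φ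

/-- `μ ∈ M_α(X, m)`: positive, normalized and `α`-invariant. -/
def MemMalpha {X : Type*} [MeasurableSpace X] (m : Measure X) (α : X → X)
    (μ : Lp ℝ ⊤ m → ℝ) : Prop :=
  IsPositiveFunctional m μ ∧ IsNormalizedFunctional m μ ∧ IsInvariantFunctional m α μ

/-- A measurable partition of unity on `X` made of nonnegative elements of `L^∞(X, m)`
summing to `1`. -/
structure PartUnity {X : Type*} [MeasurableSpace X] (m : Measure X) where
  k : ℕ
  g : Fin k → Lp ℝ ⊤ m
  nonneg : ∀ i, (0 : X → ℝ) ≤ᵐ[m] ⇑(g i)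
  sum_one : ∀ᵐ x ∂m, (∑ i, (g i : Lp ℝ ⊤ m) x) = 1

/-- The summand `a · ln (r / a)` with the conventions: it is `0` if `a = 0`, and `-∞` if
`a ≠ 0` and `r = 0`. -/
def entTerm (a r : ℝ) : EReal :=
  if a = 0 then 0 else if r = 0 then ⊥ else ((a * Real.log (r / a) : ℝ) : EReal)

/-- `τₙ(μ, D)`. -/
def tauN {X : Type*} [MeasurableSpace X] (m : Measure X) (α : X → X)
    (μ : Lp ℝ ⊤ m → ℝ) (n : ℕ) (D : PartUnity m) : EReal :=
  sSup {r : EReal | ∃ f : X → ℝ, Integrable f m ∧ (∫ x, |f x| ∂m) = 1 ∧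
    r = ∑ i, entTerm (μ (D.g i)) (∫ x, (D.g i : Lp ℝ ⊤ m) x * |f (α^[n] x)| ∂m)}

/-- The t-entropy `τ(μ) = inf_{n, D} τₙ(μ, D) / n`. -/
def tEntropy {X : Type*} [MeasurableSpace X] (m : Measure X) (α : X → X)
    (μ : Lp ℝ ⊤ m → ℝ) : EReal :=
  ⨅ (n : ℕ) (_ : 0 < n) (D : PartUnity m), (((n : ℝ)⁻¹ : ℝ) : EReal) * tauN m α μ n D

/-- The t-entropy extended by `τ(μ) = -∞` outside `M_α(X, m)`. -/
def tEntropyExt {X : Type*} [MeasurableSpace X] (m : Measure X) (α : X → X)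
    (μ : Lp ℝ ⊤ m → ℝ) : EReal :=
  @ite _ (MemMalpha m α μ) (Classical.dec _) (tEntropy m α μ) ⊥

/-! If a partition of unity `D = {gᵢ}` is so fine that the Birkhoff sum `Sₙφ` varies by at most `ε`
on each `{gᵢ ≠ 0}`, say `cᵢ ≤ Sₙφ ≤ cᵢ + ε` there, then for every `f` with `‖f‖ = 1`

  `‖A_φⁿ‖ ≥ ∫ exp (Sₙφ) |f ∘ αⁿ| dm ≥ ∑ᵢ exp cᵢ · ∫ gᵢ |f ∘ αⁿ| dm`.

By Jensen's inequality for `exp` with weights `μ[gᵢ]`, the right side is at least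
`exp (∑ᵢ μ[gᵢ] ln (∫ gᵢ |f ∘ αⁿ| dm / μ[gᵢ]) + ∑ᵢ μ[gᵢ] cᵢ)`, and by invariance
`∑ᵢ μ[gᵢ] cᵢ ≥ μ[Sₙφ] - ε = n μ[φ] - ε`. Optimizing over `f` and letting `ε → 0` gives
`ln ‖A_φⁿ‖ ≥ n (μ[φ] + τ(μ))`.
-/

/-! ### Essentially bounded functions -/

section EssentiallyBounded

variable {X E : Type*} [MeasurableSpace X] [NormedAddCommGroup E] {m : Measure X}

lemma exists_ae_norm_le_of_memLp_top {f : X → E} (hf : MemLp f ⊤ m) :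
    ∃ B : ℝ, ∀ᵐ x ∂m, ‖f x‖ ≤ B := by
  have hfin : eLpNormEssSup f m ≠ ⊤ := by simpa only [eLpNorm_exponent_top] using hf.eLpNorm_ne_top
  refine ⟨(eLpNormEssSup f m).toReal, ?_⟩
  filter_upwards [ae_le_eLpNormEssSup (f := f) (μ := m)] with x hx
  simpa only [toReal_enorm] using ENNReal.toReal_mono hfin hx

lemma memLp_top_comp {α : X → X} (hα : Measure.QuasiMeasurePreserving α m m) {f : X → E}
    (hf : MemLp f ⊤ m) : MemLp (f ∘ α) ⊤ m :=
  let ⟨B, hB⟩ := exists_ae_norm_le_of_memLp_top hf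
  memLp_top_of_bound (hf.1.comp_quasiMeasurePreserving hα) B (hα.ae hB)

lemma memLp_top_exp {f : X → ℝ} (hf : MemLp f ⊤ m) : MemLp (fun x => Real.exp (f x)) ⊤ m := by
  obtain ⟨B, hB⟩ := exists_ae_norm_le_of_memLp_top hf
  refine memLp_top_of_bound (Real.continuous_exp.comp_aestronglyMeasurable hf.1) (Real.exp B) ?_
  filter_upwards [hB] with x hx
  rw [Real.norm_eq_abs, Real.abs_exp]
  exact Real.exp_le_exp.2 (le_of_abs_le hx)

end EssentiallyBounded

/-! ### The weighted shift operator -/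

namespace ShiftBounded

variable {X E : Type*} [MeasurableSpace X] [NormedAddCommGroup E] {m : Measure X} {α : X → X}

lemma exists_map_le (hbdd : ShiftBounded m α) (hα : Measurable α) :
    ∃ C : ℝ≥0, m.map α ≤ (C : ℝ≥0∞) • m := by
  obtain ⟨C, -, hC⟩ := hbdd
  exact ⟨C, Measure.le_iff.2 fun s hs => (Measure.map_apply hα hs).trans_le (hC s hs)⟩

lemma quasiMeasurePreserving (hbdd : ShiftBounded m α) (hα : Measurable α) :
    Measure.QuasiMeasurePreserving α m m :=
  let ⟨_, hC⟩ := hbdd.exists_map_le hα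
  ⟨hα, (Measure.absolutelyContinuous_of_le hC).trans Measure.smul_absolutelyContinuous⟩

lemma integrable_comp (hbdd : ShiftBounded m α) (hα : Measurable α) {f : X → E}
    (hf : Integrable f m) : Integrable (f ∘ α) m :=
  let ⟨_, hC⟩ := hbdd.exists_map_le hα
  ((hf.smul_measure ENNReal.coe_ne_top).mono_measure hC).comp_measurable hα

lemma integrable_comp_iterate (hbdd : ShiftBounded m α) (hα : Measurable α) {f : X → E}
    (hf : Integrable f m) (n : ℕ) : Integrable (f ∘ α^[n]) m := by
  induction n with
  | zero => exact hf
  | succ n ih => exact hbdd.integrable_comp hα ih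

lemma exists_integral_norm_comp_le (hbdd : ShiftBounded m α) (hα : Measurable α) :
    ∃ C : ℝ≥0, ∀ f : X → E, Integrable f m → ∫ x, ‖f (α x)‖ ∂m ≤ C * ∫ x, ‖f x‖ ∂m := by
  obtain ⟨C, hC⟩ := hbdd.exists_map_le hα
  refine ⟨C, fun f hf => ?_⟩
  have hfC : Integrable f ((C : ℝ≥0∞) • m) := hf.smul_measure ENNReal.coe_ne_top
  calc ∫ x, ‖f (α x)‖ ∂m
      = ∫ x, ‖f x‖ ∂m.map α :=
        (integral_map hα.aemeasurable (hfC.mono_measure hC).norm.aestronglyMeasurable).symm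
    _ ≤ ∫ x, ‖f x‖ ∂((C : ℝ≥0∞) • m) :=
        integral_mono_measure hC (ae_of_all _ fun x => norm_nonneg _) hfC.norm
    _ = C * ∫ x, ‖f x‖ ∂m := by
        rw [integral_smul_measure, ENNReal.coe_toReal, smul_eq_mul]

end ShiftBounded

/-- The weighted shift operator `A_φ f = e^φ · (f ∘ α)`, acting on all functions rather than on
classes in `L¹(X, m)`. -/
def weightedShift {X : Type*} (α : X → X) (φ f : X → ℝ) (x : X) : ℝ :=
  Real.exp (φ x) * f (α x)

lemma birkhoff_succ {X : Type*} (α : X → X) (φ : X → ℝ) (n : ℕ) (x : X) :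
    birkhoff α φ (n + 1) x = φ x + birkhoff α φ n (α x) :=
  birkhoffSum_succ' α φ n x

lemma weightedShift_iterate_apply {X : Type*} (α : X → X) (φ f : X → ℝ) (n : ℕ) (x : X) :
    (weightedShift α φ)^[n] f x = Real.exp (birkhoff α φ n x) * f (α^[n] x) := by
  induction n generalizing x with
  | zero => simp [birkhoff]
  | succ n ih =>
    rw [Function.iterate_succ_apply', weightedShift, ih, birkhoff_succ, Real.exp_add, mul_assoc,
      Function.iterate_succ_apply]

lemma weightedOpNorm_nonneg {X : Type*} [MeasurableSpace X] (m : Measure X) (α : X → X) (s : ℕ)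
    (ψ : X → ℝ) (k : ℕ) : 0 ≤ weightedOpNorm m α s ψ k := by
  refine Real.sSup_nonneg ?_
  rintro r ⟨f, -, -, rfl⟩
  exact integral_nonneg fun x => by positivity

lemma weightedOpNorm_one_eq {X : Type*} [MeasurableSpace X] (m : Measure X) (α : X → X)
    (φ : X → ℝ) (n : ℕ) :
    weightedOpNorm m α 1 φ n = sSup {r : ℝ | ∃ f : X → ℝ, Integrable f m ∧ (∫ x, |f x| ∂m) = 1 ∧
      r = ∫ x, |(weightedShift α φ)^[n] f x| ∂m} := by
  simp only [weightedOpNorm, weightedShift_iterate_apply, birkhoff, one_mul, abs_mul, Real.abs_exp]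

section WeightedShift

variable {X : Type*} [MeasurableSpace X] {m : Measure X} {α : X → X} {φ : X → ℝ}

lemma integrable_weightedShift (hα : Measurable α) (hbdd : ShiftBounded m α)
    (hφ : MemLp φ ⊤ m) {f : X → ℝ} (hf : Integrable f m) : Integrable (weightedShift α φ f) m :=
  (memLp_top_exp hφ).integrable_mul (memLp_one_iff_integrable.2 (hbdd.integrable_comp hα hf))

lemma integrable_weightedShift_iterate (hα : Measurable α) (hbdd : ShiftBounded m α)
    (hφ : MemLp φ ⊤ m) {f : X → ℝ} (hf : Integrable f m) (n : ℕ) :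
    Integrable ((weightedShift α φ)^[n] f) m := by
  induction n with
  | zero => exact hf
  | succ n ih =>
    rw [Function.iterate_succ_apply']
    exact integrable_weightedShift hα hbdd hφ ih

lemma exists_integral_abs_weightedShift_le (hα : Measurable α) (hbdd : ShiftBounded m α)
    (hφ : MemLp φ ⊤ m) :
    ∃ K : ℝ, 0 ≤ K ∧ ∀ f : X → ℝ, Integrable f m →
      ∫ x, |weightedShift α φ f x| ∂m ≤ K * ∫ x, |f x| ∂m := by
  obtain ⟨B, hB⟩ := exists_ae_norm_le_of_memLp_top hφ
  obtain ⟨C, hC⟩ := hbdd.exists_integral_norm_comp_le (E := ℝ) hα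
  refine ⟨Real.exp B * C, by positivity, fun f hf => ?_⟩
  calc ∫ x, |weightedShift α φ f x| ∂m
      ≤ ∫ x, Real.exp B * |f (α x)| ∂m := by
        refine integral_mono_ae (integrable_weightedShift hα hbdd hφ hf).abs
          ((hbdd.integrable_comp hα hf).abs.const_mul _) ?_
        filter_upwards [hB] with x hx
        rw [weightedShift, abs_mul, Real.abs_exp]
        gcongr
        exact le_of_abs_le hx
    _ = Real.exp B * ∫ x, |f (α x)| ∂m := integral_const_mul _ _
    _ ≤ Real.exp B * (C * ∫ x, |f x| ∂m) := by gcongr; exact hC f hf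
    _ = Real.exp B * C * ∫ x, |f x| ∂m := (mul_assoc _ _ _).symm

lemma exists_integral_abs_weightedShift_iterate_le (hα : Measurable α) (hbdd : ShiftBounded m α)
    (hφ : MemLp φ ⊤ m) (n : ℕ) :
    ∃ K : ℝ, ∀ f : X → ℝ, Integrable f m →
      ∫ x, |(weightedShift α φ)^[n] f x| ∂m ≤ K * ∫ x, |f x| ∂m := by
  obtain ⟨K, hK0, hK⟩ := exists_integral_abs_weightedShift_le hα hbdd hφ
  refine ⟨K ^ n, fun f hf => ?_⟩
  induction n with
  | zero => simp
  | succ n ih =>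
    rw [Function.iterate_succ_apply', pow_succ', mul_assoc]
    exact (hK _ (integrable_weightedShift_iterate hα hbdd hφ hf n)).trans
      (mul_le_mul_of_nonneg_left ih hK0)

lemma integral_abs_weightedShift_iterate_le (hα : Measurable α) (hbdd : ShiftBounded m α)
    (hφ : MemLp φ ⊤ m) (n : ℕ) {f : X → ℝ} (hf : Integrable f m) :
    ∫ x, |(weightedShift α φ)^[n] f x| ∂m ≤ weightedOpNorm m α 1 φ n * ∫ x, |f x| ∂m := by
  obtain ⟨K, hK⟩ := exists_integral_abs_weightedShift_iterate_le hα hbdd hφ n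
  have hnorm : 0 ≤ ∫ x, |f x| ∂m := integral_nonneg fun x => abs_nonneg _
  rcases hnorm.eq_or_lt with hzero | hpos
  · simpa only [← hzero, mul_zero] using hK f hf
  rw [← div_le_iff₀ hpos, weightedOpNorm_one_eq]
  refine le_csSup ⟨K, ?_⟩ ⟨fun x => (∫ x, |f x| ∂m)⁻¹ * f x, hf.const_mul _, ?_, ?_⟩
  · rintro r ⟨g, hg, hg1, rfl⟩
    simpa only [hg1, mul_one] using hK g hg
  · simp only [abs_mul, abs_inv, abs_of_pos hpos]
    rw [integral_const_mul, inv_mul_cancel₀ hpos.ne']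
  · rw [div_eq_inv_mul, ← integral_const_mul]
    simp only [weightedShift_iterate_apply, abs_mul, abs_inv, abs_of_pos hpos, mul_left_comm]

lemma weightedOpNorm_one_add_le (hα : Measurable α) (hbdd : ShiftBounded m α)
    (hφ : MemLp φ ⊤ m) (p q : ℕ) :
    weightedOpNorm m α 1 φ (p + q) ≤ weightedOpNorm m α 1 φ p * weightedOpNorm m α 1 φ q := by
  have hp := weightedOpNorm_nonneg m α 1 φ p
  rw [weightedOpNorm_one_eq m α φ (p + q)]
  refine Real.sSup_le ?_ (mul_nonneg hp (weightedOpNorm_nonneg m α 1 φ q))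
  rintro r ⟨f, hf, hf1, rfl⟩
  calc ∫ x, |(weightedShift α φ)^[p + q] f x| ∂m
      = ∫ x, |(weightedShift α φ)^[p] ((weightedShift α φ)^[q] f) x| ∂m := by
        rw [Function.iterate_add_apply]
    _ ≤ weightedOpNorm m α 1 φ p * ∫ x, |(weightedShift α φ)^[q] f x| ∂m :=
        integral_abs_weightedShift_iterate_le hα hbdd hφ p
          (integrable_weightedShift_iterate hα hbdd hφ hf q)
    _ ≤ weightedOpNorm m α 1 φ p * weightedOpNorm m α 1 φ q := by
        gcongr
        simpa only [hf1, mul_one] using integral_abs_weightedShift_iterate_le hα hbdd hφ q hf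

end WeightedShift

/-- The lower bound `hc` forces `u n > 0`, so no junk value of `Real.log` occurs. -/
lemma le_limUnder_log_div_of_submultiplicative {u : ℕ → ℝ} {c : ℝ}
    (hu : ∀ p q, u (p + q) ≤ u p * u q) (hc : ∀ n : ℕ, 0 < n → Real.exp (n * c) ≤ u n) :
    c ≤ limUnder atTop fun n : ℕ => Real.log (u n) / n := by
  have hpos : ∀ n, 0 < u n := by
    intro n
    rcases n.eq_zero_or_pos with rfl | hn
    · have h1 : 0 < u 1 := (Real.exp_pos _).trans_le (hc 1 one_pos)
      exact pos_of_mul_pos_left (h1.trans_le (by simpa only [zero_add] using hu 0 1)) h1.le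
    · exact (Real.exp_pos _).trans_le (hc n hn)
  have hsub : Subadditive fun n => Real.log (u n) := fun p q => by
    rw [← Real.log_mul (hpos p).ne' (hpos q).ne']
    exact Real.log_le_log (hpos _) (hu p q)
  have hge : ∀ n : ℕ, 0 < n → c ≤ Real.log (u n) / n := fun n hn => by
    rw [le_div_iff₀ (Nat.cast_pos.2 hn), mul_comm]
    exact (Real.le_log_iff_exp_le (hpos n)).2 (hc n hn)
  have hbdd : BddBelow (Set.range fun n : ℕ => Real.log (u n) / n) := by
    refine ⟨min 0 c, ?_⟩
    rintro _ ⟨n, rfl⟩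
    rcases n.eq_zero_or_pos with rfl | hn
    · simp
    · exact (min_le_right _ _).trans (hge n hn)
  have hlim := hsub.tendsto_lim hbdd
  rw [hlim.limUnder_eq]
  exact ge_of_tendsto hlim ((eventually_gt_atTop 0).mono hge)

/-! ### Partitions of unity -/

lemma sum_mul_le_of_forall_ne_zero {ι : Type*} [Fintype ι] {p c : ι → ℝ} {w : ℝ}
    (hp : ∀ i, 0 ≤ p i) (hp1 : ∑ i, p i = 1) (hc : ∀ i, p i ≠ 0 → c i ≤ w) :
    ∑ i, c i * p i ≤ w := by
  calc ∑ i, c i * p i ≤ ∑ i, w * p i := by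
        refine Finset.sum_le_sum fun i _ => ?_
        rcases eq_or_ne (p i) 0 with hi | hi
        · simp only [hi, mul_zero, le_refl]
        · exact mul_le_mul_of_nonneg_right (hc i hi) (hp i)
    _ = w := by rw [← Finset.mul_sum, hp1, mul_one]

namespace PartUnity

variable {X : Type*} [MeasurableSpace X] {m : Measure X}

lemma memLp_top_indicator_fiber {k : ℕ} {c : X → Fin k} (hc : Measurable c) (i : Fin k) :
    MemLp ((c ⁻¹' {i}).indicator fun _ => (1 : ℝ)) ⊤ m :=
  (memLp_top_const 1).indicator (hc (measurableSet_singleton i))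

/-- The partition of unity formed by the indicators of the fibers of a measurable map to a finite
set. It serves to cut `X` into the level sets of an essentially bounded function. -/
def ofFibers (m : Measure X) {k : ℕ} (c : X → Fin k) (hc : Measurable c) : PartUnity m where
  k := k
  g i := (memLp_top_indicator_fiber hc i).toLp
  nonneg i := by
    filter_upwards [(memLp_top_indicator_fiber (m := m) hc i).coeFn_toLp] with x hx
    rw [hx]
    exact Set.indicator_nonneg (fun _ _ => zero_le_one) x
  sum_one := by
    classical
    filter_upwards [ae_all_iff.2 fun i => (memLp_top_indicator_fiber (m := m) hc i).coeFn_toLp]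
      with x hx
    simp [hx, Set.indicator_apply]

lemma ae_ofFibers_eq_of_ne_zero (m : Measure X) {k : ℕ} {c : X → Fin k} (hc : Measurable c) :
    ∀ᵐ x ∂m, ∀ i : Fin k, (ofFibers m c hc).g i x ≠ 0 → c x = i := by
  filter_upwards [ae_all_iff.2 fun i => (memLp_top_indicator_fiber (m := m) hc i).coeFn_toLp]
    with x hx i hi
  have hmem : x ∈ c ⁻¹' {i} := Set.mem_of_indicator_ne_zero ((hx i).symm.trans_ne hi)
  exact hmem

lemma exists_oscillation_le {ψ : X → ℝ} (hψ : MemLp ψ ⊤ m) {ε : ℝ} (hε : 0 < ε) :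
    ∃ (D : PartUnity m) (c : Fin D.k → ℝ),
      ∀ᵐ x ∂m, ∀ i, D.g i x ≠ 0 → ψ x ∈ Set.Icc (c i) (c i + ε) := by
  obtain ⟨B, hB⟩ := exists_ae_norm_le_of_memLp_top hψ
  obtain ⟨ψ', hψ', hψψ'⟩ := hψ.1
  set level : X → Fin (⌊2 * B / ε⌋₊ + 1) := fun x => Fin.ofNat _ ⌊(ψ' x + B) / ε⌋₊
  have hlevel : Measurable level :=
    (measurable_from_nat (f := fun j => Fin.ofNat _ j)).comp <| Nat.measurable_floor.comp <|
      (hψ'.measurable.add_const B).div_const ε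
  refine ⟨ofFibers m level hlevel, fun i => ε * i - B, ?_⟩
  filter_upwards [hB, hψψ', ae_ofFibers_eq_of_ne_zero m hlevel]
    with x hx hxψ hfib i hi
  obtain ⟨hlo, hhi⟩ := abs_le.1 hx
  have hval : (i : ℕ) = ⌊(ψ x + B) / ε⌋₊ := by
    have hlt : ⌊(ψ x + B) / ε⌋₊ < ⌊2 * B / ε⌋₊ + 1 :=
      Nat.lt_succ_of_le (Nat.floor_mono (by gcongr; linarith))
    rw [← hfib i hi]
    change ⌊(ψ' x + B) / ε⌋₊ % _ = _
    rw [← hxψ, Nat.mod_eq_of_lt hlt]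
  have hfloor := Nat.floor_le (div_nonneg (by linarith : 0 ≤ ψ x + B) hε.le)
  have hfloor' := (Nat.lt_floor_add_one ((ψ x + B) / ε)).le
  rw [← hval] at hfloor hfloor'
  rw [le_div_iff₀ hε] at hfloor
  rw [div_le_iff₀ hε] at hfloor'
  constructor <;> linarith

lemma ae_sum_mul_le (D : PartUnity m) {c : Fin D.k → ℝ} {w : X → ℝ}
    (hc : ∀ᵐ x ∂m, ∀ i, D.g i x ≠ 0 → c i ≤ w x) : ∀ᵐ x ∂m, ∑ i, c i * D.g i x ≤ w x := by
  filter_upwards [hc, ae_all_iff.2 D.nonneg, D.sum_one] with x hcx hnonneg hsum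
  exact sum_mul_le_of_forall_ne_zero hnonneg hsum hcx

lemma sum_mul_integral_le (D : PartUnity m) {c : Fin D.k → ℝ} {w h : X → ℝ}
    (hc : ∀ᵐ x ∂m, ∀ i, D.g i x ≠ 0 → c i ≤ w x) (hh : Integrable h m) (hh0 : 0 ≤ᵐ[m] h)
    (hwh : Integrable (fun x => w x * h x) m) :
    ∑ i, c i * ∫ x, D.g i x * h x ∂m ≤ ∫ x, w x * h x ∂m := by
  have hint : ∀ i, Integrable (fun x => c i * (D.g i x * h x)) m := fun i =>
    (hh.mul_of_top_right (Lp.memLp (D.g i))).const_mul _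
  calc ∑ i, c i * ∫ x, D.g i x * h x ∂m
      = ∫ x, ∑ i, c i * (D.g i x * h x) ∂m := by
        simp only [integral_finsetSum _ fun i _ => hint i, integral_const_mul]
    _ ≤ ∫ x, w x * h x ∂m := by
        refine integral_mono_ae (integrable_finsetSum _ fun i _ => hint i) hwh ?_
        filter_upwards [D.ae_sum_mul_le hc, hh0] with x hx hx0
        simpa only [Finset.sum_mul, mul_assoc] using mul_le_mul_of_nonneg_right hx hx0

end PartUnity

/-! ### Positive, normalized and invariant functionals -/

section Functional

variable {X : Type*} [MeasurableSpace X] {m : Measure X} {μ : Lp ℝ ⊤ m →ₗ[ℝ] ℝ}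

lemma IsPositiveFunctional.map_mono (hμ : IsPositiveFunctional m μ) {f g : Lp ℝ ⊤ m}
    (hfg : f ≤ᵐ[m] g) : μ f ≤ μ g := by
  rw [← sub_nonneg, ← map_sub]
  refine hμ _ ?_
  filter_upwards [hfg, Lp.coeFn_sub g f] with x hx hsub
  rw [hsub]
  exact sub_nonneg.2 hx

lemma IsNormalizedFunctional.sum_map_partUnity (hμ : IsNormalizedFunctional m μ)
    (D : PartUnity m) : ∑ i, μ (D.g i) = 1 := by
  rw [← map_sum]
  refine hμ _ ?_
  filter_upwards [Lp.coeFn_fun_finsetSum Finset.univ D.g, D.sum_one] with x hcoe hsum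
  exact hcoe.trans hsum

lemma IsPositiveFunctional.map_le_sum_map_partUnity (hμ : IsPositiveFunctional m μ)
    (D : PartUnity m) {f : Lp ℝ ⊤ m} {c : Fin D.k → ℝ}
    (hc : ∀ᵐ x ∂m, ∀ i, D.g i x ≠ 0 → f x ≤ c i) : μ f ≤ ∑ i, μ (D.g i) * c i := by
  have hle : f ≤ᵐ[m] (∑ i, c i • D.g i : Lp ℝ ⊤ m) := by
    have hneg : ∀ᵐ x ∂m, ∑ i, -c i * D.g i x ≤ -f x :=
      D.ae_sum_mul_le (hc.mono fun x hx i hi => neg_le_neg (hx i hi))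
    filter_upwards [hneg, Lp.coeFn_fun_finsetSum Finset.univ fun i => c i • D.g i,
      ae_all_iff.2 fun i => Lp.coeFn_smul (c i) (D.g i)] with x hx hsum hsmul
    simpa only [hsum, hsmul, Pi.smul_apply, smul_eq_mul, neg_mul, Finset.sum_neg_distrib,
      neg_le_neg_iff] using hx
  calc μ f ≤ μ (∑ i, c i • D.g i) := hμ.map_mono hle
    _ = ∑ i, μ (D.g i) * c i := by simp only [map_sum, map_smul, smul_eq_mul, mul_comm]

lemma IsInvariantFunctional.exists_ae_eq_birkhoff {α : X → X} (hμ : IsInvariantFunctional m α μ)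
    (hα : Measure.QuasiMeasurePreserving α m m) (φ : Lp ℝ ⊤ m) (n : ℕ) :
    ∃ Ψ : Lp ℝ ⊤ m, Ψ =ᵐ[m] birkhoff α φ n ∧ μ Ψ = n * μ φ := by
  induction n with
  | zero =>
    refine ⟨0, (Lp.coeFn_zero ℝ ⊤ m).trans (ae_of_all _ fun _ => ?_), by simp⟩
    simp [birkhoff]
  | succ n ih =>
    obtain ⟨Ψ, hΨ, hμΨ⟩ := ih
    have hcomp : MemLp (Ψ ∘ α) ⊤ m := memLp_top_comp hα (Lp.memLp Ψ)
    refine ⟨φ + hcomp.toLp, ?_, ?_⟩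
    · filter_upwards [Lp.coeFn_add φ hcomp.toLp, hcomp.coeFn_toLp, hα.ae hΨ] with x hadd hcoe hx
      rw [hadd, Pi.add_apply, hcoe, Function.comp_apply, hx, birkhoff_succ]
    · rw [map_add, hμ Ψ _ hcomp.coeFn_toLp, hμΨ]
      push_cast
      ring

end Functional

/-! ### Entropy sums -/

lemma entTerm_eq_coe {a r : ℝ} (h : a ≠ 0 → r ≠ 0) :
    entTerm a r = ((a * Real.log (r / a) : ℝ) : EReal) := by
  rcases eq_or_ne a 0 with ha | ha
  · simp [entTerm, ha]
  · simp [entTerm, ha, h ha]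

lemma sum_entTerm_eq_bot {ι : Type*} [Fintype ι] {a r : ι → ℝ} {i : ι} (ha : a i ≠ 0)
    (hr : r i = 0) : ∑ i, entTerm (a i) (r i) = ⊥ := by
  classical
  rw [← Finset.add_sum_erase _ _ (Finset.mem_univ i), entTerm, if_neg ha, if_pos hr, EReal.bot_add]

lemma sum_entTerm_eq_coe {ι : Type*} [Fintype ι] {a r : ι → ℝ} (h : ∀ i, a i ≠ 0 → r i ≠ 0) :
    ∑ i, entTerm (a i) (r i) = ((∑ i, a i * Real.log (r i / a i) : ℝ) : EReal) := by
  rw [Finset.sum_congr rfl fun i _ => entTerm_eq_coe (h i)]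
  exact (map_sum (⟨⟨Real.toEReal, EReal.coe_zero⟩, EReal.coe_add⟩ : ℝ →+ EReal) _ _).symm

/-- Jensen's inequality for `exp` at the points `log (r i / a i) + c i` with weights `a i`. -/
lemma exp_sum_mul_log_div_add_le {ι : Type*} [Fintype ι] {a r c : ι → ℝ} (ha : ∀ i, 0 ≤ a i)
    (ha1 : ∑ i, a i = 1) (hr : ∀ i, 0 ≤ r i) (har : ∀ i, a i ≠ 0 → r i ≠ 0) :
    Real.exp (∑ i, a i * Real.log (r i / a i) + ∑ i, a i * c i) ≤ ∑ i, Real.exp (c i) * r i := by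
  calc Real.exp (∑ i, a i * Real.log (r i / a i) + ∑ i, a i * c i)
      = Real.exp (∑ i, a i • (Real.log (r i / a i) + c i)) := by
        simp only [smul_eq_mul, mul_add, Finset.sum_add_distrib]
    _ ≤ ∑ i, a i • Real.exp (Real.log (r i / a i) + c i) :=
        convexOn_exp.map_sum_le (fun i _ => ha i) ha1 fun i _ => Set.mem_univ _
    _ ≤ ∑ i, Real.exp (c i) * r i := by
        refine Finset.sum_le_sum fun i _ => ?_
        rcases (ha i).eq_or_lt with hi | hi
        · rw [← hi, zero_smul]
          exact mul_nonneg (Real.exp_pos _).le (hr i)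
        · have hri : 0 < r i := (hr i).lt_of_ne' (har i hi.ne')
          rw [smul_eq_mul, Real.exp_add, Real.exp_log (div_pos hri hi), ← mul_assoc,
            mul_div_cancel₀ _ hi.ne', mul_comm]

lemma exp_add_sum_le_of_le_sum_entTerm {ι : Type*} [Fintype ι] {a r c : ι → ℝ} {t : ℝ}
    (ha : ∀ i, 0 ≤ a i) (ha1 : ∑ i, a i = 1) (hr : ∀ i, 0 ≤ r i)
    (ht : (t : EReal) ≤ ∑ i, entTerm (a i) (r i)) :
    Real.exp (t + ∑ i, a i * c i) ≤ ∑ i, Real.exp (c i) * r i := by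
  have har : ∀ i, a i ≠ 0 → r i ≠ 0 := fun i hai hri =>
    EReal.coe_ne_bot t (le_bot_iff.1 (ht.trans_eq (sum_entTerm_eq_bot hai hri)))
  rw [sum_entTerm_eq_coe har, EReal.coe_le_coe_iff] at ht
  exact (Real.exp_le_exp.2 (by gcongr)).trans (exp_sum_mul_log_div_add_le ha ha1 hr har)

lemma mul_lt_tauN_of_lt_tEntropy {X : Type*} [MeasurableSpace X] {m : Measure X} {α : X → X}
    {μ : Lp ℝ ⊤ m → ℝ} {t : ℝ} (ht : (t : EReal) < tEntropy m α μ) {n : ℕ} (hn : 0 < n)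
    (D : PartUnity m) : ((n * t : ℝ) : EReal) < tauN m α μ n D := by
  have htD : (t : EReal) < ((n : ℝ)⁻¹ : ℝ) * tauN m α μ n D :=
    ht.trans_le (iInf_le_of_le n (iInf_le_of_le hn (iInf_le _ D)))
  contrapose! htD
  calc (((n : ℝ)⁻¹ : ℝ) : EReal) * tauN m α μ n D
      ≤ ((n : ℝ)⁻¹ : ℝ) * ((n * t : ℝ) : EReal) :=
        mul_le_mul_of_nonneg_left htD (EReal.coe_nonneg.2 (by positivity))
    _ = t := by rw [← EReal.coe_mul, inv_mul_cancel_left₀ (Nat.cast_ne_zero.2 hn.ne')]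

/-! ### The finite-time inequality -/

section Young

variable {X : Type*} [MeasurableSpace X] {m : Measure X} {α : X → X} {μ : Lp ℝ ⊤ m →ₗ[ℝ] ℝ}

lemma exp_add_sum_le_weightedOpNorm_of_lt_tauN (hα : Measurable α) (hbdd : ShiftBounded m α)
    (hpos : IsPositiveFunctional m μ) (hnorm : IsNormalizedFunctional m μ) {φ : X → ℝ}
    (hφ : MemLp φ ⊤ m) {n : ℕ} {D : PartUnity m} {c : Fin D.k → ℝ}
    (hc : ∀ᵐ x ∂m, ∀ i, D.g i x ≠ 0 → c i ≤ birkhoff α φ n x) {t : ℝ}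
    (ht : (t : EReal) < tauN m α μ n D) :
    Real.exp (t + ∑ i, μ (D.g i) * c i) ≤ weightedOpNorm m α 1 φ n := by
  obtain ⟨_, ⟨f, hf, hf1, rfl⟩, htf⟩ := lt_sSup_iff.1 ht
  have hAf : ∀ x, Real.exp (birkhoff α φ n x) * |f (α^[n] x)| = |(weightedShift α φ)^[n] f x| :=
    fun x => by rw [weightedShift_iterate_apply, abs_mul, Real.abs_exp]
  have hmass : ∀ i, 0 ≤ ∫ x, D.g i x * |f (α^[n] x)| ∂m := fun i =>
    integral_nonneg_of_ae ((D.nonneg i).mono fun x hx => mul_nonneg hx (abs_nonneg _))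
  calc Real.exp (t + ∑ i, μ (D.g i) * c i)
      ≤ ∑ i, Real.exp (c i) * ∫ x, D.g i x * |f (α^[n] x)| ∂m :=
        exp_add_sum_le_of_le_sum_entTerm (fun i => hpos _ (D.nonneg i))
          (hnorm.sum_map_partUnity D) hmass htf.le
    _ ≤ ∫ x, Real.exp (birkhoff α φ n x) * |f (α^[n] x)| ∂m := by
        refine D.sum_mul_integral_le (hc.mono fun x hx i hi => Real.exp_le_exp.2 (hx i hi))
          (hbdd.integrable_comp_iterate hα hf n).abs (ae_of_all _ fun _ => abs_nonneg _) ?_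
        simpa only [hAf] using (integrable_weightedShift_iterate hα hbdd hφ hf n).abs
    _ ≤ weightedOpNorm m α 1 φ n := by
        simpa only [hAf, hf1, mul_one] using
          integral_abs_weightedShift_iterate_le hα hbdd hφ n hf

lemma exp_mul_add_le_weightedOpNorm_of_lt_tEntropy (hα : Measurable α) (hbdd : ShiftBounded m α)
    (hμ : MemMalpha m α μ) (φ : Lp ℝ ⊤ m) {t : ℝ} (ht : (t : EReal) < tEntropy m α μ) {n : ℕ}
    (hn : 0 < n) : Real.exp (n * (μ φ + t)) ≤ weightedOpNorm m α 1 φ n := by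
  obtain ⟨hpos, hnorm, hinv⟩ := hμ
  -- The gap between `t` and `τ(μ)` absorbs the oscillation of the Birkhoff sum.
  obtain ⟨t', htt', ht'⟩ := EReal.lt_iff_exists_real_btwn.1 ht
  have hε : 0 < n * (t' - t) :=
    mul_pos (Nat.cast_pos.2 hn) (sub_pos.2 (EReal.coe_lt_coe_iff.1 htt'))
  obtain ⟨Ψ, hΨ, hμΨ⟩ := hinv.exists_ae_eq_birkhoff (hbdd.quasiMeasurePreserving hα) φ n
  obtain ⟨D, c, hc⟩ := PartUnity.exists_oscillation_le (Lp.memLp Ψ) hε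
  have hlow : ∀ᵐ x ∂m, ∀ i, D.g i x ≠ 0 → c i ≤ birkhoff α φ n x := by
    filter_upwards [hc, hΨ] with x hx hΨx i hi
    exact hΨx ▸ (hx i hi).1
  have hmean : n * μ φ ≤ ∑ i, μ (D.g i) * c i + n * (t' - t) := by
    calc n * μ φ = μ Ψ := hμΨ.symm
      _ ≤ ∑ i, μ (D.g i) * (c i + n * (t' - t)) :=
        hpos.map_le_sum_map_partUnity D (hc.mono fun x hx i hi => (hx i hi).2)
      _ = ∑ i, μ (D.g i) * c i + n * (t' - t) := by
        simp only [mul_add, Finset.sum_add_distrib, ← Finset.sum_mul, hnorm.sum_map_partUnity D,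
          one_mul]
  calc Real.exp (n * (μ φ + t))
      ≤ Real.exp (n * t' + ∑ i, μ (D.g i) * c i) := Real.exp_le_exp.2 (by linarith)
    _ ≤ weightedOpNorm m α 1 φ n :=
        exp_add_sum_le_weightedOpNorm_of_lt_tauN hα hbdd hpos hnorm (Lp.memLp φ) hlow
          (mul_lt_tauN_of_lt_tEntropy ht' hn D)

end Young

/-- **Young inequality (11)**: `λ(φ) ≥ μ[φ] + τ(μ)` for every `φ ∈ L^∞(X, m)` and every
`μ ∈ M_α(X, m)`. -/
theorem young_inequality_spectralPotential_tEntropy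
    {X : Type*} [MeasurableSpace X] (m : Measure X) (α : X → X)
    (hα : Measurable α) (hbdd : ShiftBounded m α)
    (φ : Lp ℝ ⊤ m) (μ : Lp ℝ ⊤ m →L[ℝ] ℝ) (hμ : MemMalpha m α ⇑μ) :
    ((μ φ : ℝ) : EReal) + tEntropy m α (⇑μ) ≤
      ((spectralPotential m α (⇑φ) : ℝ) : EReal) := by
  refine EReal.ge_of_forall_gt_iff_ge.1 fun z hz => EReal.coe_le_coe_iff.2 ?_
  have hgap : ((z - μ φ : ℝ) : EReal) < tEntropy m α μ := EReal.sub_lt_of_lt_add' hz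
  refine le_limUnder_log_div_of_submultiplicative
    (weightedOpNorm_one_add_le hα hbdd (Lp.memLp φ)) fun n hn => ?_
  simpa only [ContinuousLinearMap.coe_coe, add_sub_cancel] using
    exp_mul_add_le_weightedOpNorm_of_lt_tEntropy (μ := (μ : Lp ℝ ⊤ m →ₗ[ℝ] ℝ)) hα hbdd hμ φ hgap hn

end
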